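/- Let q be a real number with 0 < q and q ≠ 1, let h₁, h₂, l₁, α₁, λ be real numbers and t₁, t₂ nonzero reals. Assume λ + α₁ = -N for some positive integer N (so (q^{λ+α₁};q)_n = 0 for all n > N and the series below is a finite sum), and assume q^{h₂-l₁+n}·t₂/t₁ ≠ 1 for all integers 1 ≤ n ≤ N. Then the function g(x) = x^{-α₁} · Σ_{n=0}^{N} (q^{h₂+1/2}t₂/x;q)_n · q^n · (q^{λ+α₁};q)_n / (q^{h₂-l₁+1}·t₂/t₁;q)_n · Σ_{k=0}^{n} [(q^{λ-h₁+l₁+α₁};q)_k / ((q;q)_k (q;q)_{n-k})] · q^{k(k+1)/2} · (-q^{h₂-l₁}·t₂/t₁)^k satisfies the variant of the confluent q-hypergeometric equation of type (1,2) for all x > 0. -/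

import Mathlib

/-- The finite q-shifted factorial `(a;q)_n = ∏_{i=0}^{n-1} (1 - a q^i)`. -/
noncomputable def qPoch (q a : ℝ) (n : ℕ) : ℝ :=
  ∏ i ∈ Finset.range n, (1 - a * q ^ i)

/-- The variant of the confluent q-hypergeometric equation of type (1,2) (for `x > 0`). -/
def confEq12 (q h₁ h₂ l₁ α₁ lam t₁ t₂ : ℝ) (g : ℝ → ℝ) : Prop :=
  ∀ x : ℝ, 0 < x →
    q ^ (h₁ + h₂ - l₁ - 2 * lam + 1/2) * t₂ * (q ^ (l₁ - 1/2) * t₁ - x) * g (q * x)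
    + (x - q ^ (h₁ + 1/2) * t₁) * (x - q ^ (h₂ + 1/2) * t₂) * g (x / q)
    - (q ^ α₁ * x ^ 2
        - q ^ (h₁ + h₂ - lam + 1/2) * (q ^ (-h₂) * t₁ + q ^ (-h₁) * t₂ + q ^ (-l₁) * t₂) * x
        + q ^ (h₁ + h₂ - lam) * (q + 1) * t₁ * t₂) * g x = 0


lemma qPoch_succ (q a : ℝ) (n : ℕ) : qPoch q a (n + 1) = qPoch q a n * (1 - a * q ^ n) := by
  simp [qPoch, Finset.prod_range_succ]

lemma qPoch_zero (q a : ℝ) : qPoch q a 0 = 1 := by simp [qPoch]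

lemma qPoch_succ' (q a : ℝ) (n : ℕ) : qPoch q a (n + 1) = (1 - a) * qPoch q (a * q) n := by
  simp only [qPoch, Finset.prod_range_succ', pow_zero, mul_one]
  rw [mul_comm]
  congr 1
  apply Finset.prod_congr rfl
  intro i _
  ring

/-- convolution -/
noncomputable def cv (u v : ℕ → ℝ) (n : ℕ) : ℝ := ∑ k ∈ Finset.range (n + 1), u k * v (n - k)

lemma cv_R1 (q B s : ℝ) (u v : ℕ → ℝ)
    (hu : ∀ k, u (k + 1) * (1 - q ^ (k + 1)) = -(1 - B * q ^ k) * s * q ^ (k + 1) * u k)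
    (hv : ∀ k, v (k + 1) * (1 - q ^ (k + 1)) = v k) (n : ℕ) :
    (1 - q ^ (n + 1)) * cv u v (n + 1) = (1 - s * q ^ (n + 1)) * cv u v n
      + B * s * q ^ (n + 1) * cv (fun k => q ^ k * u k) v n := by
  have e : (1 - q ^ (n + 1)) * cv u v (n + 1)
      = ∑ k ∈ Finset.range (n + 2), u k * (v (n + 1 - k) * (1 - q ^ (n + 1 - k)))
        + ∑ k ∈ Finset.range (n + 2), q ^ (n + 1 - k) * (u k * (1 - q ^ k)) * v (n + 1 - k) := by
    rw [cv, Finset.mul_sum, ← Finset.sum_add_distrib]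
    apply Finset.sum_congr rfl
    intro k hk
    have hk' : k ≤ n + 1 := by simp at hk; omega
    have : q ^ (n + 1) = q ^ (n + 1 - k) * q ^ k := by rw [← pow_add]; congr 1; omega
    rw [this]; ring
  rw [e, Finset.sum_range_succ, Finset.sum_range_succ' _ (n + 1)]
  simp only [cv, Finset.mul_sum, Nat.sub_self, pow_zero, sub_self, mul_zero, add_zero, zero_mul]
  rw [← Finset.sum_add_distrib, ← Finset.sum_add_distrib]
  apply Finset.sum_congr rfl
  intro k hk
  have hk' : k ≤ n := by simp at hk; omega
  obtain ⟨j, rfl⟩ := Nat.exists_eq_add_of_le hk'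
  have e1 : k + j + 1 - k = j + 1 := by omega
  have e2 : k + j + 1 - (k + 1) = j := by omega
  have e3 : k + j - k = j := by omega
  rw [e1, e2, e3, hv, hu]
  ring

lemma cv_R2 (q : ℝ) (u v : ℕ → ℝ)
    (hv : ∀ k, v (k + 1) * (1 - q ^ (k + 1)) = v k) (n : ℕ) :
    cv (fun k => q ^ k * u k) v (n + 1) = q ^ (n + 1) * cv u v (n + 1)
      + cv (fun k => q ^ k * u k) v n := by
  have e : cv (fun k => q ^ k * u k) v (n + 1) - q ^ (n + 1) * cv u v (n + 1)
      = ∑ k ∈ Finset.range (n + 2), q ^ k * u k * (v (n + 1 - k) * (1 - q ^ (n + 1 - k))) := by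
    rw [cv, cv, Finset.mul_sum, ← Finset.sum_sub_distrib]
    apply Finset.sum_congr rfl
    intro k hk
    have hk' : k ≤ n + 1 := by simp at hk; omega
    have : q ^ (n + 1) = q ^ (n + 1 - k) * q ^ k := by rw [← pow_add]; congr 1; omega
    rw [this]; ring
  rw [Finset.sum_range_succ] at e
  simp only [Nat.sub_self, pow_zero, sub_self, mul_zero, add_zero] at e
  have e' : ∑ k ∈ Finset.range (n + 1), q ^ k * u k * (v (n + 1 - k) * (1 - q ^ (n + 1 - k)))
      = cv (fun k => q ^ k * u k) v n := by
    rw [cv]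
    apply Finset.sum_congr rfl
    intro k hk
    have hk' : k ≤ n := by simp at hk; omega
    obtain ⟨j, rfl⟩ := Nat.exists_eq_add_of_le hk'
    have e1 : k + j + 1 - k = j + 1 := by omega
    have e3 : k + j - k = j := by omega
    rw [e1, e3, hv]
  linarith

lemma cv_rec (q B s : ℝ) (u v : ℕ → ℝ)
    (hu : ∀ k, u (k + 1) * (1 - q ^ (k + 1)) = -(1 - B * q ^ k) * s * q ^ (k + 1) * u k)
    (hv : ∀ k, v (k + 1) * (1 - q ^ (k + 1)) = v k) (m : ℕ) :
    (1 - q ^ (m + 2)) * cv u v (m + 2) = ((1 + q) - (1 + s) * q ^ (m + 2)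
      + B * s * q ^ (2 * m + 3)) * cv u v (m + 1) - q * (1 - s * q ^ (m + 1)) * cv u v m := by
  have a := cv_R1 q B s u v hu hv m
  have b := cv_R1 q B s u v hu hv (m + 1)
  have c := cv_R2 q u v hv m
  linear_combination b - q * a + B * s * q ^ (m + 2) * c

/-- the operator divided by y, applied to (y;q)_n -/
noncomputable def LL (q A B s y : ℝ) (n : ℕ) : ℝ :=
  (y - q * s) * qPoch q (y / q) n - q * A ^ 2 * qPoch q y (n + 1)
    - q * A * B * s * q ^ n * qPoch q y n
    + (q * (A + B * s + A * s) - A * (q + 1) * y) * qPoch q y n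

lemma partial_sum (q A B s y : ℝ) (hq : q ≠ 0) (N : ℕ) (S : ℕ → ℝ)
    (hden : ∀ n, 1 ≤ n → n ≤ N → 1 - s * q ^ n ≠ 0)
    (hS0 : S 0 = 1) (hS1 : (1 - q) * S 1 = 1 - s * q + B * s * q)
    (hS : ∀ m, (1 - q ^ (m + 2)) * S (m + 2) = ((1 + q) - (1 + s) * q ^ (m + 2)
      + B * s * q ^ (2 * m + 3)) * S (m + 1) - q * (1 - s * q ^ (m + 1)) * S m) (m : ℕ)
    (hm : m ≤ N) :
    ∑ n ∈ Finset.range (m + 1), (q ^ n * qPoch q A n / qPoch q (s * q) n * S n) * LL q A B s y n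
      = q ^ m * qPoch q A m / qPoch q (s * q) m * (1 - A * q ^ m) / (q ^ m) ^ 2 *
        ((1 - q ^ (m + 1)) * S (m + 1) * qPoch q y m
          - (1 - A * q ^ (m + 1)) * S m * qPoch q y (m + 1)) := by
  induction m with
  | zero =>
    simp [LL, qPoch_succ, qPoch_zero, hS0]
    linear_combination (A - 1) * hS1
  | succ m ih =>
    rw [Finset.sum_range_succ, ih (by omega)]
    have hd := hden (m + 1) (by omega) hm
    have hS' := hS m
    have e1 : qPoch q (y / q) (m + 1) = (1 - y / q) * qPoch q y m := by
      rw [qPoch_succ', div_mul_cancel₀ _ hq]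
    have e2 : 1 - s * q * q ^ m = 1 - s * q ^ (m + 1) := by ring
    rw [LL, e1]
    simp only [qPoch_succ, e2]
    have hp : q ^ m ≠ 0 := pow_ne_zero _ hq
    generalize qPoch q y m = Y
    have hdd : qPoch q A m / (qPoch q (s * q) m * (1 - s * q ^ (m + 1)))
       = qPoch q A m / qPoch q (s * q) m / (1 - s * q ^ (m + 1)) := by rw [div_div]
    have h3 : ∀ z w : ℝ, z * (qPoch q A m * w) / (qPoch q (s * q) m * (1 - s * q ^ (m + 1)))
       = qPoch q A m / qPoch q (s * q) m * (z * w / (1 - s * q ^ (m + 1))) := by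
      intro z w
      rw [div_mul_div_comm]; ring
    have h4 : q ^ m * qPoch q A m / qPoch q (s * q) m
      = qPoch q A m / qPoch q (s * q) m * q ^ m := by ring
    rw [h3, h4]
    generalize qPoch q A m / qPoch q (s * q) m = D
    have e5 : q ^ (m + 1) = q ^ m * q := by ring
    have e6 : q ^ (m + 1 + 1) = q ^ m * q ^ 2 := by ring
    have e7 : q ^ (m + 2) = q ^ m * q ^ 2 := by ring
    have e8 : q ^ (2 * m + 3) = (q ^ m) ^ 2 * q ^ 3 := by ring
    rw [e5] at hd
    simp only [e5, e6, e7, e8] at hS' ⊢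
    generalize q ^ m = p at *
    have hS'' : (1 - p * q ^ 2) * S (m + 1 + 1) = (1 + q - (1 + s) * (p * q ^ 2) + B * s * (p ^ 2 * q ^ 3)) * S (m + 1) - q * (1 - s * (p * q)) * S m := hS'
    rw [hS'']
    have hd1 : 1 - s * p * q ≠ 0 := by rwa [mul_assoc]
    have hd2 : 1 - p * q * s ≠ 0 := by rwa [mul_comm s] at hd
    have hd3 : 1 - p * s * q ≠ 0 := by rwa [mul_comm s p] at hd1
    have hd4 : 1 - q * p * s ≠ 0 := by rwa [mul_comm p q] at hd2
    have hd5 : 1 - q * s * p ≠ 0 := by convert hd using 2; ring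
    have hd6 : 1 - s * q * p ≠ 0 := by convert hd using 2; ring
    field_simp
    ring

lemma stmt_core (q A B s y : ℝ) (hq : q ≠ 0) (N : ℕ) (S : ℕ → ℝ)
    (hden : ∀ n, 1 ≤ n → n ≤ N → 1 - s * q ^ n ≠ 0) (hA : A * q ^ N = 1)
    (hS0 : S 0 = 1) (hS1 : (1 - q) * S 1 = 1 - s * q + B * s * q)
    (hS : ∀ m, (1 - q ^ (m + 2)) * S (m + 2) = ((1 + q) - (1 + s) * q ^ (m + 2)
      + B * s * q ^ (2 * m + 3)) * S (m + 1) - q * (1 - s * q ^ (m + 1)) * S m) (F : ℝ → ℝ)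
    (hF : ∀ z, F z = ∑ n ∈ Finset.range (N + 1),
      qPoch q z n * (q ^ n * qPoch q A n / qPoch q (s * q) n * S n)) :
    y * (y - q * s) * F (y / q) + q * A * (B * s - A * y) * (1 - y) * F (y * q)
      - q * (A * B * s - (A + B * s + A * s) * y + A * (1 + 1 / q) * y ^ 2) * F y = 0 := by
  have h := partial_sum q A B s y hq N S hden hS0 hS1 hS N le_rfl
  rw [hA] at h
  simp only [sub_self, mul_zero, zero_div, zero_mul] at h
  rw [← mul_zero y, ← h]
  simp only [hF, Finset.mul_sum]
  rw [← Finset.sum_add_distrib, ← Finset.sum_sub_distrib]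
  apply Finset.sum_congr rfl
  intro n _
  have e := qPoch_succ' q y n
  have e' := qPoch_succ q y n
  have e1 : q * (1 + 1 / q) = q + 1 := by field_simp
  generalize (q ^ n * qPoch q A n / qPoch q (s * q) n * S n) = c
  rw [LL]
  linear_combination (-c * q * A * (B * s - A * y)) * e + (q * A * B * s) * c * e'
    - A * y ^ 2 * qPoch q y n * c * e1

lemma uq_rec (q B s : ℝ) (hq : 0 < q) (hne : ∀ k : ℕ, qPoch q q k ≠ 0) (k : ℕ) :
    (qPoch q B (k + 1) / qPoch q q (k + 1)
      * q ^ (((k + 1 : ℕ) : ℝ) * (((k + 1 : ℕ) : ℝ) + 1) / 2) * (-s) ^ (k + 1)) * (1 - q ^ (k + 1))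
    = -(1 - B * q ^ k) * s * q ^ (k + 1) *
      (qPoch q B k / qPoch q q k * q ^ ((k : ℝ) * ((k : ℝ) + 1) / 2) * (-s) ^ k) := by
  have h1 : q ^ (((k + 1 : ℕ) : ℝ) * (((k + 1 : ℕ) : ℝ) + 1) / 2)
      = q ^ ((k : ℝ) * ((k : ℝ) + 1) / 2) * q ^ (k + 1) := by
    rw [← Real.rpow_natCast q (k + 1), ← Real.rpow_add hq]
    congr 1
    push_cast
    ring
  have hk := hne k
  have hk1 := hne (k + 1)
  rw [qPoch_succ] at hk1
  have hk2 := right_ne_zero_of_mul hk1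
  rw [h1, qPoch_succ, qPoch_succ]
  generalize q ^ ((k : ℝ) * ((k : ℝ) + 1) / 2) = w
  have e : 1 - q ^ (k + 1) = 1 - q * q ^ k := by ring
  have e' : q ^ (k + 1) = q * q ^ k := by ring
  rw [e']
  generalize q ^ k = p at *
  have hk3 : 1 - p * q ≠ 0 := by rwa [mul_comm] at hk2
  field_simp
  ring

theorem stmt5 (q h₁ h₂ l₁ α₁ lam t₁ t₂ : ℝ) (N : ℕ)
    (hq : 0 < q) (hq1 : q ≠ 1) (ht₁ : t₁ ≠ 0) (ht₂ : t₂ ≠ 0)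
    (hN : 0 < N) (hNlam : lam + α₁ = -(N : ℝ))
    (hden : ∀ n : ℕ, 1 ≤ n → n ≤ N → q ^ (h₂ - l₁ + (n : ℝ)) * t₂ / t₁ ≠ 1) :
    confEq12 q h₁ h₂ l₁ α₁ lam t₁ t₂ (fun x =>
      x ^ (-α₁) * ∑ n ∈ Finset.range (N + 1),
        qPoch q (q ^ (h₂ + 1/2) * t₂ / x) n * q ^ n * qPoch q (q ^ (lam + α₁)) n /
            qPoch q (q ^ (h₂ - l₁ + 1) * t₂ / t₁) n *
          ∑ k ∈ Finset.range (n + 1),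
            qPoch q (q ^ (lam - h₁ + l₁ + α₁)) k / (qPoch q q k * qPoch q q (n - k)) *
              q ^ ((k : ℝ) * ((k : ℝ) + 1) / 2) * (-(q ^ (h₂ - l₁) * t₂ / t₁)) ^ k) := by
  have hq0 : q ≠ 0 := hq.ne'
  have hone : ∀ k : ℕ, 1 - q ^ (k + 1) ≠ 0 := by
    intro k h
    have : q ^ (k + 1) = 1 := by linarith
    exact hq1 ((pow_eq_one_iff_of_nonneg hq.le (by omega)).1 this)
  have hne : ∀ k : ℕ, qPoch q q k ≠ 0 := by
    intro k
    rw [qPoch, Finset.prod_ne_zero_iff]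
    intro i _
    have := hone i
    rwa [pow_succ'] at this
  set s := q ^ (h₂ - l₁) * t₂ / t₁ with hs
  set A := q ^ (lam + α₁) with hA
  set B := q ^ (lam - h₁ + l₁ + α₁) with hB
  have hsq : q ^ (h₂ - l₁ + 1) * t₂ / t₁ = s * q := by
    rw [Real.rpow_add hq, Real.rpow_one, hs]; ring
  rw [hsq]
  set u : ℕ → ℝ := fun k => qPoch q B k / qPoch q q k
    * q ^ ((k : ℝ) * ((k : ℝ) + 1) / 2) * (-s) ^ k with hu
  set v : ℕ → ℝ := fun k => 1 / qPoch q q k with hv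
  have hu' : ∀ k, u (k + 1) * (1 - q ^ (k + 1)) = -(1 - B * q ^ k) * s * q ^ (k + 1) * u k :=
    fun k => uq_rec q B s hq hne k
  have hv' : ∀ k, v (k + 1) * (1 - q ^ (k + 1)) = v k := by
    intro k
    have h1 := hne k
    have h2 := hne (k + 1)
    have h3 := hone k
    simp only [hv, qPoch_succ]
    have e : 1 - q * q ^ k = 1 - q ^ (k + 1) := by ring
    rw [e]
    field_simp
  have hu0 : u 0 = 1 := by simp [hu, qPoch_zero]
  have hv0 : v 0 = 1 := by simp [hv, qPoch_zero]
  have hS0 : cv u v 0 = 1 := by simp [cv, hu0, hv0]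
  have hS1 : (1 - q) * cv u v 1 = 1 - s * q + B * s * q := by
    have := cv_R1 q B s u v hu' hv' 0
    simp only [zero_add, pow_one, hS0] at this
    rw [this]
    simp [cv, hu0, hv0]
  have hAN : A * q ^ N = 1 := by
    rw [hA, hNlam, ← Real.rpow_natCast, ← Real.rpow_add hq]; simp
  have hden' : ∀ n, 1 ≤ n → n ≤ N → 1 - s * q ^ n ≠ 0 := by
    intro n h1 h2 h
    apply hden n h1 h2
    rw [Real.rpow_add hq, Real.rpow_natCast]
    rw [hs] at h
    linear_combination -h
  have hin : ∀ n, ∑ k ∈ Finset.range (n + 1), qPoch q B k / (qPoch q q k * qPoch q q (n - k)) *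
              q ^ ((k : ℝ) * ((k : ℝ) + 1) / 2) * (-s) ^ k = cv u v n := by
    intro n
    rw [cv]
    apply Finset.sum_congr rfl
    intro k _
    simp only [hu, hv]
    rw [← div_div]
    ring
  simp only [hin]
  intro x hx
  set F : ℝ → ℝ := fun z => ∑ n ∈ Finset.range (N + 1),
      qPoch q z n * (q ^ n * qPoch q A n / qPoch q (s * q) n * cv u v n) with hF
  have hF' : ∀ z, ∑ n ∈ Finset.range (N + 1),
      qPoch q z n * q ^ n * qPoch q A n / qPoch q (s * q) n * cv u v n = F z := by
    intro z
    simp only [hF]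
    apply Finset.sum_congr rfl
    intro n _
    ring
  simp only [hF']
  set b := q ^ (h₂ + 1/2) * t₂ with hb
  have hx0 : x ≠ 0 := hx.ne'
  have core := stmt_core q A B s (b / x) hq0 N (cv u v) hden' hAN hS0 hS1
    (cv_rec q B s u v hu' hv') F (fun z => rfl)
  have y1 : b / (q * x) = b / x / q := by field_simp
  have y2 : b / (x / q) = b / x * q := by field_simp
  rw [y1, y2]
  clear_value F
  generalize F (b / x / q) = F0 at *
  generalize F (b / x * q) = F2 at *
  generalize F (b / x) = F1 at *
  clear hin hF' hu' hv' hS0 hS1 hu0 hv0 hden' hden hAN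
  clear_value u v
  rw [Real.mul_rpow hq.le hx.le, Real.div_rpow hx.le hq.le]
  generalize x ^ (-α₁) = X
  obtain ⟨r, hr⟩ : ∃ r, r = q ^ (1/2 : ℝ) := ⟨_, rfl⟩
  have hr0 : 0 < r := hr ▸ Real.rpow_pos_of_pos hq _
  have hrr : q = r ^ 2 := by
    rw [hr, ← Real.rpow_natCast, ← Real.rpow_mul hq.le]; norm_num
  have p1 := Real.rpow_pos_of_pos hq h₁
  have p2 := Real.rpow_pos_of_pos hq h₂
  have p3 := Real.rpow_pos_of_pos hq l₁
  have p4 := Real.rpow_pos_of_pos hq α₁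
  have p5 := Real.rpow_pos_of_pos hq lam
  have e2 : q ^ (2 * lam) = (q ^ lam) ^ 2 := by
    rw [mul_comm, Real.rpow_mul hq.le]; norm_num
  simp only [Real.rpow_add hq, Real.rpow_sub hq, Real.rpow_neg hq.le, e2, ← hr] at hs hA hB hb ⊢
  generalize q ^ h₁ = H1 at *
  generalize q ^ h₂ = H2 at *
  generalize q ^ l₁ = L1 at *
  generalize q ^ α₁ = a at *
  generalize q ^ lam = M at *
  clear_value s A B b
  clear hr
  subst hrr hs hA hB hb
  have key : ∀ K Z W : ℝ, Z = 0 → W = K * Z → W = 0 := by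
    intro K Z W h1 h2; rw [h2, h1, mul_zero]
  refine key (X * a * x ^ 2 / (r ^ 2 * (M * a) * (M / H1 * L1 * a) * (H2 / L1 * t₂ / t₁))) _ _ core ?_
  field_simp
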